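/- Let z, z' ∈ {h, p, r, c, rc}, let Σ be a finite alphabet with |Σ| ≥ 2, and let α, β be array patterns. If L_{Σ,z}(α) = L_{Σ,z'}(β), then α and β are equivalent up to a renaming of variables. -/

import Mathlib

/-- A nonempty rectangular two-dimensional word (array) over `σ`. -/
structure Arr (σ : Type) : Type where
  rows : ℕ
  cols : ℕ
  rows_pos : 0 < rows
  cols_pos : 0 < cols
  entry : Fin rows → Fin cols → σ

namespace Arr

variable {σ γ : Type}

/-- Column concatenation: place `V` to the right of `U`; `none` if heights differ. -/
def colCat (U V : Arr σ) : Option (Arr σ) :=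
  if h : U.rows = V.rows then
    some { rows := U.rows
           cols := U.cols + V.cols
           rows_pos := U.rows_pos
           cols_pos := by have := U.cols_pos; omega
           entry := fun i j =>
             if hj : (j : ℕ) < U.cols then U.entry i ⟨j, hj⟩
             else V.entry (Fin.cast h i) ⟨(j : ℕ) - U.cols, by have := j.isLt; omega⟩ }
  else none

/-- Row concatenation: place `V` below `U`; `none` if widths differ. -/
def rowCat (U V : Arr σ) : Option (Arr σ) :=
  if h : U.cols = V.cols then
    some { rows := U.rows + V.rows
           cols := U.cols
           rows_pos := by have := U.rows_pos; omega
           cols_pos := U.cols_pos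
           entry := fun i j =>
             if hi : (i : ℕ) < U.rows then U.entry ⟨i, hi⟩ j
             else V.entry ⟨(i : ℕ) - U.rows, by have := i.isLt; omega⟩ (Fin.cast h j) }
  else none

/-- A two-dimensional morphism: compatible with both concatenations,
with "both sides undefined" counting as equal. -/
def IsMorphism (h : Arr σ → Arr γ) : Prop :=
  (∀ V W : Arr σ, Option.map h (colCat V W) = colCat (h V) (h W)) ∧
  (∀ V W : Arr σ, Option.map h (rowCat V W) = rowCat (h V) (h W))

/-- Concatenate a nonempty list of (possibly undefined) arrays with the
given partial concatenation operation; `none` on the empty list. -/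
def catListO (op : Arr σ → Arr σ → Option (Arr σ)) : List (Option (Arr σ)) → Option (Arr σ)
  | [] => none
  | [a] => a
  | a :: b :: rest => a.bind fun x => (catListO op (b :: rest)).bind fun y => op x y

/-- `g_{⦶,⊖}`: substitute and assemble, first column-concatenating each row,
then row-concatenating the rows. -/
def subCR {X : Type} (g : X → Arr σ) (α : Arr X) : Option (Arr σ) :=
  catListO rowCat (List.ofFn fun i : Fin α.rows =>
    catListO colCat (List.ofFn fun j : Fin α.cols => some (g (α.entry i j))))

/-- `g_{⊖,⦶}`: substitute and assemble, first row-concatenating each column,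
then column-concatenating the columns. -/
def subRC {X : Type} (g : X → Arr σ) (α : Arr X) : Option (Arr σ) :=
  catListO colCat (List.ofFn fun j : Fin α.cols =>
    catListO rowCat (List.ofFn fun i : Fin α.rows => some (g (α.entry i j))))

/-- A substitution is uniform if all images have the same dimensions. -/
def Uniform {X : Type} (g : X → Arr σ) : Prop :=
  ∃ m n : ℕ, ∀ x : X, (g x).rows = m ∧ (g x).cols = n

end Arr

open Arr

/-- The five modes of array pattern languages. -/
inductive Mode | h | p | r | c | rc
deriving DecidableEq

/-- The array pattern language of an array pattern (an array over the
variables `ℕ`) in each mode. -/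
def langOf (σ : Type) : Mode → Arr ℕ → Set (Arr σ)
  | Mode.h, α => {W | ∃ g : Arr ℕ → Arr σ, IsMorphism g ∧ g α = W}
  | Mode.p, α => {W | ∃ s : ℕ → Arr σ, subCR s α = some W ∧ subRC s α = some W}
  | Mode.r, α => {W | ∃ s : ℕ → Arr σ, subCR s α = some W}
  | Mode.c, α => {W | ∃ s : ℕ → Arr σ, subRC s α = some W}
  | Mode.rc, α =>
      {W | ∃ s : ℕ → Arr σ, subCR s α = some W} ∪ {W | ∃ s : ℕ → Arr σ, subRC s α = some W}

/-- Two array patterns are equivalent up to a renaming of variables. -/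
def EquivRen (α β : Arr ℕ) : Prop :=
  ∃ (hr : α.rows = β.rows) (hc : α.cols = β.cols),
    ∀ (i i' : Fin α.rows) (j j' : Fin α.cols),
      α.entry i j = α.entry i' j' ↔
        β.entry (Fin.cast hr i) (Fin.cast hc j) =
          β.entry (Fin.cast hr i') (Fin.cast hc j')

namespace Arr

variable {σ γ : Type}

/-- Total entry access. -/
def get (A : Arr σ) (i j : ℕ) : Option σ :=
  if h : i < A.rows ∧ j < A.cols then some (A.entry ⟨i, h.1⟩ ⟨j, h.2⟩) else none

theorem get_of_lt (A : Arr σ) {i j : ℕ} (hi : i < A.rows) (hj : j < A.cols) :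
    A.get i j = some (A.entry ⟨i, hi⟩ ⟨j, hj⟩) := by
  simp [get, hi, hj]

theorem eq_of_get (A B : Arr σ) (hr : A.rows = B.rows) (hc : A.cols = B.cols)
    (h : ∀ i j, i < A.rows → j < A.cols → A.get i j = B.get i j) : A = B := by
  obtain ⟨m, n, hm, hn, e⟩ := A
  obtain ⟨m', n', hm', hn', e'⟩ := B
  simp only at hr hc
  subst hr hc
  congr
  funext i j
  have := h i j i.2 j.2
  simpa [get] using this

theorem colCat_spec (U V W : Arr σ) (h : colCat U V = some W) :
    U.rows = V.rows ∧ W.rows = U.rows ∧ W.cols = U.cols + V.cols ∧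
    (∀ i j, j < U.cols → W.get i j = U.get i j) ∧
    (∀ i j, W.get i (U.cols + j) = V.get i j) := by
  unfold colCat at h
  split_ifs at h with hr
  simp only [Option.some.injEq] at h
  subst h
  refine ⟨hr, rfl, rfl, ?_, ?_⟩
  · intro i j hj
    have : j < U.cols + V.cols := by omega
    simp [get, hj, this]
  · intro i j
    simp [get, hr]

theorem rowCat_spec (U V W : Arr σ) (h : rowCat U V = some W) :
    U.cols = V.cols ∧ W.cols = U.cols ∧ W.rows = U.rows + V.rows ∧
    (∀ i j, i < U.rows → W.get i j = U.get i j) ∧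
    (∀ i j, W.get (U.rows + i) j = V.get i j) := by
  unfold rowCat at h
  split_ifs at h with hr
  simp only [Option.some.injEq] at h
  subst h
  refine ⟨hr, rfl, rfl, ?_, ?_⟩
  · intro i j hj
    have : i < U.rows + V.rows := by omega
    simp [get, hj, this]
  · intro i j
    simp [get, hr]

theorem colCat_ex (U V : Arr σ) (h : U.rows = V.rows) : ∃ W, colCat U V = some W := by
  simp [colCat, h]

theorem rowCat_ex (U V : Arr σ) (h : U.cols = V.cols) : ∃ W, rowCat U V = some W := by
  simp [rowCat, h]

theorem catCol_fwd (l : List (Option (Arr σ))) : ∀ W, catListO colCat l = some W →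
    l.length ≤ W.cols ∧ ∀ k (hk : k < l.length), ∃ A, l[k] = some A ∧ A.rows = W.rows ∧
      (W.cols = l.length → A.cols = 1 ∧ ∀ i, W.get i k = A.get i 0) := by
  induction l with
  | nil => intro W h; simp [catListO] at h
  | cons a l ih =>
    intro W h
    cases l with
    | nil =>
      simp only [catListO] at h
      subst h
      refine ⟨W.cols_pos, ?_⟩
      intro k hk
      have : k = 0 := by simpa using hk
      subst this
      exact ⟨W, rfl, rfl, fun h => ⟨by simpa using h, fun _ => rfl⟩⟩
    | cons b l =>
      simp only [catListO, Option.bind_eq_some_iff] at h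
      obtain ⟨x, hx, y, hy, hxy⟩ := h
      subst hx
      obtain ⟨h1, h2⟩ := ih y hy
      obtain ⟨e1, e2, e3, e4, e5⟩ := colCat_spec _ _ _ hxy
      have hp := x.cols_pos
      simp only [List.length_cons] at h1 ⊢
      refine ⟨by omega, ?_⟩
      intro k hk
      cases k with
      | zero =>
        exact ⟨x, rfl, e2.symm, fun h => ⟨by omega, fun i => e4 i 0 hp⟩⟩
      | succ k =>
        obtain ⟨A, hA, hr, hg⟩ := h2 k (by simpa using hk)
        refine ⟨A, by simpa using hA, by omega, fun h => ?_⟩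
        have hx1 : x.cols = 1 := by omega
        obtain ⟨g1, g2⟩ := hg (by simp only [List.length_cons]; omega)
        refine ⟨g1, fun i => ?_⟩
        rw [← g2, ← e5, hx1, Nat.add_comm]

theorem catCol_ex (l : List (Option (Arr σ))) (r : ℕ) : l ≠ [] →
    (∀ a ∈ l, ∃ A : Arr σ, a = some A ∧ A.rows = r ∧ A.cols = 1) →
    ∃ W, catListO colCat l = some W ∧ W.rows = r ∧ W.cols = l.length := by
  induction l with
  | nil => intro h; simp at h
  | cons a l ih =>
    intro _ h
    obtain ⟨A, rfl, hr, hc⟩ := h a (by simp)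
    cases l with
    | nil => exact ⟨A, rfl, hr, by simpa using hc⟩
    | cons b l =>
      obtain ⟨y, hy, yr, yc⟩ := ih (by simp) (fun a ha => h a (List.mem_cons_of_mem _ ha))
      obtain ⟨W, hW⟩ := colCat_ex A y (by omega)
      obtain ⟨e1, e2, e3, -⟩ := colCat_spec _ _ _ hW
      refine ⟨W, ?_, by omega, ?_⟩
      · simp [catListO, hy, hW]
      · simp only [List.length_cons] at yc ⊢; omega

theorem catRow_fwd (l : List (Option (Arr σ))) : ∀ W, catListO rowCat l = some W →
    l.length ≤ W.rows ∧ ∀ k (hk : k < l.length), ∃ A, l[k] = some A ∧ A.cols = W.cols ∧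
      (W.rows = l.length → A.rows = 1 ∧ ∀ i, W.get k i = A.get 0 i) := by
  induction l with
  | nil => intro W h; simp [catListO] at h
  | cons a l ih =>
    intro W h
    cases l with
    | nil =>
      simp only [catListO] at h
      subst h
      refine ⟨W.rows_pos, ?_⟩
      intro k hk
      have : k = 0 := by simpa using hk
      subst this
      exact ⟨W, rfl, rfl, fun h => ⟨by simpa using h, fun _ => rfl⟩⟩
    | cons b l =>
      simp only [catListO, Option.bind_eq_some_iff] at h
      obtain ⟨x, hx, y, hy, hxy⟩ := h
      subst hx
      obtain ⟨h1, h2⟩ := ih y hy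
      obtain ⟨e1, e2, e3, e4, e5⟩ := rowCat_spec _ _ _ hxy
      have hp := x.rows_pos
      simp only [List.length_cons] at h1 ⊢
      refine ⟨by omega, ?_⟩
      intro k hk
      cases k with
      | zero =>
        exact ⟨x, rfl, e2.symm, fun h => ⟨by omega, fun i => e4 0 i hp⟩⟩
      | succ k =>
        obtain ⟨A, hA, hr, hg⟩ := h2 k (by simpa using hk)
        refine ⟨A, by simpa using hA, by omega, fun h => ?_⟩
        have hx1 : x.rows = 1 := by omega
        obtain ⟨g1, g2⟩ := hg (by simp only [List.length_cons]; omega)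
        refine ⟨g1, fun i => ?_⟩
        rw [← g2, ← e5, hx1, Nat.add_comm]

theorem catRow_ex (l : List (Option (Arr σ))) (r : ℕ) : l ≠ [] →
    (∀ a ∈ l, ∃ A : Arr σ, a = some A ∧ A.cols = r ∧ A.rows = 1) →
    ∃ W, catListO rowCat l = some W ∧ W.cols = r ∧ W.rows = l.length := by
  induction l with
  | nil => intro h; simp at h
  | cons a l ih =>
    intro _ h
    obtain ⟨A, rfl, hr, hc⟩ := h a (by simp)
    cases l with
    | nil => exact ⟨A, rfl, hr, by simpa using hc⟩
    | cons b l =>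
      obtain ⟨y, hy, yr, yc⟩ := ih (by simp) (fun a ha => h a (List.mem_cons_of_mem _ ha))
      obtain ⟨W, hW⟩ := rowCat_ex A y (by omega)
      obtain ⟨e1, e2, e3, -⟩ := rowCat_spec _ _ _ hW
      refine ⟨W, ?_, by omega, ?_⟩
      · simp [catListO, hy, hW]
      · simp only [List.length_cons] at yc ⊢; omega

theorem catListO_map (f : Arr σ → Arr γ) (op : Arr σ → Arr σ → Option (Arr σ))
    (op' : Arr γ → Arr γ → Option (Arr γ))
    (h : ∀ V W, Option.map f (op V W) = op' (f V) (f W)) (l : List (Option (Arr σ))) :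
    Option.map f (catListO op l) = catListO op' (l.map (Option.map f)) := by
  induction l with
  | nil => rfl
  | cons a l ih =>
    cases l with
    | nil => rfl
    | cons b l =>
      simp only [List.map_cons, catListO] at ih ⊢
      rw [← ih]
      cases a with
      | none => rfl
      | some x =>
        cases catListO op (b :: l) with
        | none => rfl
        | some y => exact h x y

/-- The `1 × 1` array. -/
def single (x : σ) : Arr σ := ⟨1, 1, one_pos, one_pos, fun _ _ => x⟩

/-- Entrywise application of a map. -/
def mapArr (f : σ → γ) (A : Arr σ) : Arr γ :=
  ⟨A.rows, A.cols, A.rows_pos, A.cols_pos, fun i j => f (A.entry i j)⟩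

theorem mapArr_get (f : σ → γ) (A : Arr σ) (i j : ℕ) :
    (mapArr f A).get i j = (A.get i j).map f := by
  by_cases h : i < A.rows ∧ j < A.cols <;> simp [get, mapArr, h]

theorem mapArr_morph (f : σ → γ) : IsMorphism (mapArr f) := by
  constructor
  · intro V W
    by_cases h : V.rows = W.rows
    · simp [colCat, mapArr, h]
      congr 1
      funext i j
      exact apply_dite f _ _ _
    · simp [colCat, mapArr, h]
  · intro V W
    by_cases h : V.cols = W.cols
    · simp [rowCat, mapArr, h]
      congr 1
      funext i j
      exact apply_dite f _ _ _
    · simp [rowCat, mapArr, h]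

theorem subCR_fwd {X : Type} (s : X → Arr σ) (α : Arr X) (W : Arr σ)
    (h : subCR s α = some W) : α.rows ≤ W.rows ∧ α.cols ≤ W.cols ∧
    (W.rows = α.rows → W.cols = α.cols → ∀ (i : Fin α.rows) (j : Fin α.cols),
      W.get i j = (s (α.entry i j)).get 0 0) := by
  obtain ⟨h1, h2⟩ := catRow_fwd _ _ h
  simp only [List.length_ofFn, List.getElem_ofFn] at h1 h2
  refine ⟨h1, ?_, ?_⟩
  · obtain ⟨A, hA, hc, -⟩ := h2 0 α.rows_pos
    have := (catCol_fwd _ _ hA).1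
    simp only [List.length_ofFn] at this
    omega
  · intro hr hc i j
    obtain ⟨A, hA, hAc, hg⟩ := h2 i i.2
    obtain ⟨-, g2⟩ := hg hr
    obtain ⟨-, k2⟩ := catCol_fwd _ _ hA
    simp only [List.length_ofFn, List.getElem_ofFn] at k2
    obtain ⟨B, hB, -, hg'⟩ := k2 j j.2
    obtain ⟨-, q⟩ := hg' (by omega)
    simp only [Option.some.injEq] at hB
    rw [g2, q, ← hB]

theorem subCR_single {X : Type} (α : Arr X) : subCR single α = some α := by
  obtain ⟨W, hW, hc, hr⟩ := catRow_ex (List.ofFn fun i : Fin α.rows =>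
    catListO colCat (List.ofFn fun j : Fin α.cols => some (single (α.entry i j)))) α.cols
    (by have := α.rows_pos; simp [List.ofFn_eq_nil_iff]; omega) (by
      intro a ha
      rw [List.mem_ofFn] at ha
      obtain ⟨i, rfl⟩ := ha
      obtain ⟨A, hA, h1, h2⟩ := catCol_ex
        (List.ofFn fun j : Fin α.cols => some (single (α.entry i j))) 1
        (by have := α.cols_pos; simp [List.ofFn_eq_nil_iff]; omega) (by
          intro a ha
          rw [List.mem_ofFn] at ha
          obtain ⟨j, rfl⟩ := ha
          exact ⟨_, rfl, rfl, rfl⟩)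
      exact ⟨A, hA, by simpa using h2, h1⟩)
  simp only [List.length_ofFn] at hr
  have hs : subCR single α = some W := hW
  obtain ⟨-, -, h⟩ := subCR_fwd _ _ _ hs
  rw [hs]
  congr 1
  refine eq_of_get _ _ hr hc fun i j hi hj => ?_
  rw [hr] at hi
  rw [hc] at hj
  have := h hr hc ⟨i, hi⟩ ⟨j, hj⟩
  rw [get_of_lt α hi hj]
  simpa [get, single] using this

theorem subCR_morph {X : Type} (g : Arr X → Arr σ) (hg : IsMorphism g) (α : Arr X) :
    subCR (fun x => g (single x)) α = some (g α) := by
  have := congrArg (Option.map g) (subCR_single α)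
  rw [Option.map_some] at this
  rw [← this, subCR, subCR, catListO_map g _ _ hg.2, List.map_ofFn]
  congr 2
  funext i
  simp only [Function.comp]
  rw [catListO_map g _ _ hg.1, List.map_ofFn]
  rfl

theorem subRC_fwd {X : Type} (s : X → Arr σ) (α : Arr X) (W : Arr σ)
    (h : subRC s α = some W) : α.cols ≤ W.cols ∧ α.rows ≤ W.rows ∧
    (W.cols = α.cols → W.rows = α.rows → ∀ (i : Fin α.cols) (j : Fin α.rows),
      W.get j i = (s (α.entry j i)).get 0 0) := by
  obtain ⟨h1, h2⟩ := catCol_fwd _ _ h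
  simp only [List.length_ofFn, List.getElem_ofFn] at h1 h2
  refine ⟨h1, ?_, ?_⟩
  · obtain ⟨A, hA, hc, -⟩ := h2 0 α.cols_pos
    have := (catRow_fwd _ _ hA).1
    simp only [List.length_ofFn] at this
    omega
  · intro hr hc i j
    obtain ⟨A, hA, hAc, hg⟩ := h2 i i.2
    obtain ⟨-, g2⟩ := hg hr
    obtain ⟨-, k2⟩ := catRow_fwd _ _ hA
    simp only [List.length_ofFn, List.getElem_ofFn] at k2
    obtain ⟨B, hB, -, hg'⟩ := k2 j j.2
    obtain ⟨-, q⟩ := hg' (by omega)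
    simp only [Option.some.injEq] at hB
    rw [g2, q, ← hB]

theorem subRC_single {X : Type} (α : Arr X) : subRC single α = some α := by
  obtain ⟨W, hW, hc, hr⟩ := catCol_ex (List.ofFn fun i : Fin α.cols =>
    catListO rowCat (List.ofFn fun j : Fin α.rows => some (single (α.entry j i)))) α.rows
    (by have := α.cols_pos; simp [List.ofFn_eq_nil_iff]; omega) (by
      intro a ha
      rw [List.mem_ofFn] at ha
      obtain ⟨i, rfl⟩ := ha
      obtain ⟨A, hA, h1, h2⟩ := catRow_ex
        (List.ofFn fun j : Fin α.rows => some (single (α.entry j i))) 1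
        (by have := α.rows_pos; simp [List.ofFn_eq_nil_iff]; omega) (by
          intro a ha
          rw [List.mem_ofFn] at ha
          obtain ⟨j, rfl⟩ := ha
          exact ⟨_, rfl, rfl, rfl⟩)
      exact ⟨A, hA, by simpa using h2, h1⟩)
  simp only [List.length_ofFn] at hr
  have hs : subRC single α = some W := hW
  obtain ⟨-, -, h⟩ := subRC_fwd _ _ _ hs
  rw [hs]
  congr 1
  refine eq_of_get _ _ hc hr fun j i hj hi => ?_
  rw [hr] at hi
  rw [hc] at hj
  have := h hr hc ⟨i, hi⟩ ⟨j, hj⟩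
  rw [get_of_lt α hj hi]
  simpa [get, single] using this

theorem subRC_morph {X : Type} (g : Arr X → Arr σ) (hg : IsMorphism g) (α : Arr X) :
    subRC (fun x => g (single x)) α = some (g α) := by
  have := congrArg (Option.map g) (subRC_single α)
  rw [Option.map_some] at this
  rw [← this, subRC, subRC, catListO_map g _ _ hg.1, List.map_ofFn]
  congr 2
  funext i
  simp only [Function.comp]
  rw [catListO_map g _ _ hg.2, List.map_ofFn]
  rfl

theorem mapArr_mem (f : ℕ → σ) (z : Mode) (α : Arr ℕ) : mapArr f α ∈ langOf σ z α := by
  have h1 := subCR_morph _ (mapArr_morph f) α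
  have h2 := subRC_morph _ (mapArr_morph f) α
  cases z
  · exact ⟨_, mapArr_morph f, rfl⟩
  · exact ⟨_, h1, h2⟩
  · exact ⟨_, h1⟩
  · exact ⟨_, h2⟩
  · exact Or.inl ⟨_, h1⟩

theorem lang_fwd (z : Mode) (α : Arr ℕ) (W : Arr σ) (h : W ∈ langOf σ z α) :
    α.rows ≤ W.rows ∧ α.cols ≤ W.cols ∧ ∃ t : ℕ → Option σ,
    (W.rows = α.rows → W.cols = α.cols → ∀ (i : Fin α.rows) (j : Fin α.cols),
      W.get i j = t (α.entry i j)) := by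
  have key : (∃ s : ℕ → Arr σ, subCR s α = some W) ∨ (∃ s : ℕ → Arr σ, subRC s α = some W) := by
    cases z
    · obtain ⟨g, hg, rfl⟩ := h
      exact Or.inl ⟨_, subCR_morph g hg α⟩
    · obtain ⟨s, h1, -⟩ := h
      exact Or.inl ⟨s, h1⟩
    · exact Or.inl h
    · exact Or.inr h
    · exact h
  rcases key with ⟨s, hs⟩ | ⟨s, hs⟩
  · obtain ⟨a, b, c⟩ := subCR_fwd _ _ _ hs
    exact ⟨a, b, fun x => (s x).get 0 0, c⟩
  · obtain ⟨a, b, c⟩ := subRC_fwd _ _ _ hs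
    exact ⟨b, a, fun x => (s x).get 0 0, fun hr hc i j => c hc hr j i⟩

theorem key_sub {σ : Type} [Nontrivial σ] (z z' : Mode) (α β : Arr ℕ)
    (hs : langOf σ z α ⊆ langOf σ z' β) :
    β.rows ≤ α.rows ∧ β.cols ≤ α.cols ∧
    ∀ (hr : β.rows = α.rows) (hc : β.cols = α.cols) (i i' : Fin β.rows) (j j' : Fin β.cols),
      β.entry i j = β.entry i' j' →
      α.entry (Fin.cast hr i) (Fin.cast hc j) = α.entry (Fin.cast hr i') (Fin.cast hc j') := by
  classical
  obtain ⟨a, b, hab⟩ := exists_pair_ne σ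
  have H := fun f => lang_fwd z' β _ (hs (mapArr_mem (σ := σ) f z α))
  refine ⟨(H fun _ => a).1, (H fun _ => a).2.1, ?_⟩
  intro hr hc i i' j j' hβ
  obtain ⟨-, -, t, ht⟩ := H fun x =>
    if x = α.entry (Fin.cast hr i) (Fin.cast hc j) then a else b
  have e1 := ht hr.symm hc.symm i j
  have e2 := ht hr.symm hc.symm i' j'
  rw [hβ, ← e2] at e1
  rw [mapArr_get, mapArr_get, get_of_lt _ (show (i : ℕ) < α.rows by omega) (show (j : ℕ) < α.cols by omega),
    get_of_lt _ (show (i' : ℕ) < α.rows by omega) (show (j' : ℕ) < α.cols by omega)] at e1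
  simp only [Option.map_some, Option.some.injEq] at e1
  by_contra hne
  exact hab (((if_pos rfl).symm.trans e1).trans (if_neg fun h => hne h.symm))

end Arr

/-- over an alphabet with at least two letters, equal array
pattern languages (of any modes) force the patterns to be equivalent up to
renaming. -/
theorem stmt3 {σ : Type} [Fintype σ] (hcard : 2 ≤ Fintype.card σ)
    (z z' : Mode) (α β : Arr ℕ)
    (heq : langOf σ z α = langOf σ z' β) :
    EquivRen α β := by
  have : Nontrivial σ := Fintype.one_lt_card_iff_nontrivial.mp hcard
  obtain ⟨a1, a2, a3⟩ := key_sub z z' α β heq.subset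
  obtain ⟨b1, b2, b3⟩ := key_sub z' z β α heq.symm.subset
  have hr : α.rows = β.rows := le_antisymm b1 a1
  have hc : α.cols = β.cols := le_antisymm b2 a2
  refine ⟨hr, hc, fun i i' j j' => ⟨b3 hr hc i i' j j', fun h => ?_⟩⟩
  exact a3 hr.symm hc.symm (Fin.cast hr i) (Fin.cast hr i') (Fin.cast hc j) (Fin.cast hc j') h
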